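/- Let G be a 2-connected graph, let e = uv be an edge of G, and let f : V(G) → {0,1} be a function with ∑_{z ∈ V(G)} f(z) even and f(u) = f(v) = 1. Then G has an f-parity perfect forest not containing the edge e if and only if ∑_{z ∈ V(G)} f(z) ≥ 4. -/

import Mathlib

open SimpleGraph

/-- The degree of `v` in `F`, defined via `Set.ncard` so that no decidability
instances are needed. -/
noncomputable def fdeg {V : Type*} (F : SimpleGraph V) (v : V) : ℕ :=
  (F.neighborSet v).ncard

/-- `F` is a semiperfect spanning forest of `G`: `F` is a spanning subgraph of `G`
that is a forest, and every connected component of `F` is an induced subgraph of `G`. -/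
def IsSemiperfectForest {V : Type*} (G F : SimpleGraph V) : Prop :=
  F ≤ G ∧ F.IsAcyclic ∧ ∀ x y : V, F.Reachable x y → G.Adj x y → F.Adj x y

def PFCut {V : Type*} (G : SimpleGraph V) (S : Set V) : Prop :=
  ∀ X : Set V, X ⊆ S → X.Nonempty → X ≠ S → ∃ a ∈ X, ∃ b ∈ S, b ∉ X ∧ G.Adj a b

theorem pf_closed {V : Type*} {H : SimpleGraph V} (P : V → Prop)
    (hP : ∀ a b, P a → H.Adj a b → P b) {x y : V} (h : H.Reachable x y) (hx : P x) : P y := by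
  rw [reachable_iff_reflTransGen] at h
  induction h with
  | refl => exact hx
  | tail _ hab ih => exact hP _ _ ih hab

theorem pf_cut_of_conn {V : Type*} {G : SimpleGraph V} {S : Set V}
    (h : (G.induce S).Connected) : PFCut G S := by
  intro X hXS ⟨x, hx⟩ hne
  by_contra hcon
  push Not at hcon
  apply hne
  refine Set.Subset.antisymm hXS fun z hz => ?_
  exact pf_closed (H := G.induce S) (fun a => a.1 ∈ X)
    (fun a b ha hab => by
      by_contra hb
      exact hcon a.1 ha b.1 b.2 hb hab) (h.preconnected ⟨x, hXS hx⟩ ⟨z, hz⟩) hx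

theorem pf_cut_singleton {V : Type*} (G : SimpleGraph V) (v : V) : PFCut G {v} := by
  intro X hX hn hne
  rcases Set.subset_singleton_iff_eq.1 hX with h | h
  · simp [h] at hn
  · exact absurd h hne

theorem pf_cut_insert {V : Type*} {G : SimpleGraph V} {K : Set V} (hK : PFCut G K) {k l : V}
    (hk : k ∈ K) (hkl : G.Adj k l) : PFCut G (insert l K) := by
  intro X hX hn hne
  by_cases h1 : (X ∩ K).Nonempty
  · by_cases h2 : X ∩ K = K
    · have hkX : k ∈ X := (h2.symm ▸ hk : k ∈ X ∩ K).1
      refine ⟨k, hkX, l, Or.inl rfl, fun hl => hne ?_, hkl⟩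
      refine Set.Subset.antisymm hX (Set.insert_subset hl fun z hz => ?_)
      exact (h2.symm ▸ hz : z ∈ X ∩ K).1
    · obtain ⟨a, ha, b, hb, hbX, hab⟩ := hK (X ∩ K) Set.inter_subset_right h1 h2
      exact ⟨a, ha.1, b, Or.inr hb, fun h => hbX ⟨h, hb⟩, hab⟩
  · have hnot : ∀ z ∈ X, z ∉ K := fun z hz hzK => h1 ⟨z, hz, hzK⟩
    obtain ⟨x, hx⟩ := hn
    have hxl : x = l := (hX hx).resolve_right (hnot x hx)
    subst hxl
    exact ⟨x, hx, k, Or.inr hk, fun h => hnot k h hk, hkl.symm⟩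

theorem pf_step {V : Type*} [Fintype V] {G : SimpleGraph V}
    (h2 : ∀ x : V, PFCut G (({x} : Set V)ᶜ)) {A : Set V} {u v w : V}
    (hA : PFCut G A) (hB : PFCut G Aᶜ) (hu : u ∈ A) (hv : v ∉ A) (hw : w ∉ A) (hwv : w ≠ v) :
    ∃ b, b ∉ A ∧ b ≠ v ∧ PFCut G (insert b A) ∧ PFCut G (insert b A)ᶜ := by
  classical
  let Q : Set (V × Set V) := {p | p.1 ∉ A ∧ p.1 ≠ v ∧ (∃ a ∈ A, G.Adj a p.1) ∧ p.2 ⊆ Aᶜ ∧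
    p.1 ∉ p.2 ∧ v ∈ p.2 ∧ PFCut G p.2}
  have hQ : Q.Nonempty := by
    obtain ⟨a, ha, b, hb, hbA, hab⟩ := h2 v A (fun z hz hzv => hv (hzv ▸ hz)) ⟨u, hu⟩
      (fun h => hw (h.symm ▸ hwv : w ∈ A))
    refine ⟨(b, {v}), hbA, hb, ⟨a, ha, hab⟩, ?_, hb, rfl, pf_cut_singleton G v⟩
    simpa using hv
  obtain ⟨⟨b, K⟩, ⟨hbA, hbv, ⟨a, ha, hab⟩, hKA, hbK, hvK, hK⟩, hmax⟩ :=
    Set.exists_max_image Q (fun p => p.2.ncard) Q.toFinite hQ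
  simp only at hbA hbv hab hKA hbK hvK hK hmax
  have hno : ∀ b' l, l ∉ K → (b', insert l K) ∉ Q := by
    intro b' l hl hq
    have := hmax _ hq
    simp only at this
    rw [Set.ncard_insert_of_notMem hl] at this
    omega
  refine ⟨b, hbA, hbv, pf_cut_insert hA ha hab, ?_⟩
  suffices h : (insert b A)ᶜ = K by rw [h]; exact hK
  by_contra hne
  have hKL : ∀ k ∈ K, ∀ l, l ∉ A → l ≠ b → l ∉ K → ¬ G.Adj k l := by
    intro k hk l hlA hlb hlK hkl
    refine hno b l hlK ⟨hbA, hbv, ⟨a, ha, hab⟩, Set.insert_subset hlA hKA, ?_, Or.inr hvK,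
      pf_cut_insert hK hk hkl⟩
    rintro (h | h)
    · exact hlb h.symm
    · exact hbK h
  have hL : ((insert b A)ᶜ \ K).Nonempty := by
    by_contra h
    rw [Set.not_nonempty_iff_eq_empty, Set.sdiff_eq_empty] at h
    refine hne (Set.Subset.antisymm h fun z hz => ?_)
    rintro (h | h)
    · exact hbK (h ▸ hz)
    · exact hKA hz h
  obtain ⟨b', hb', c, hc, hcL, hbc⟩ := h2 b ((insert b A)ᶜ \ K)
    (fun z hz h => hz.1 (Or.inl h)) hL
    (fun h => by
      have : u ∈ (insert b A)ᶜ \ K := by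
        rw [h]; intro h'; exact hbA (h' ▸ hu)
      exact this.1 (Or.inr hu))
  have hb'A : b' ∉ A := fun h => hb'.1 (Or.inr h)
  have hb'b : b' ≠ b := fun h => hb'.1 (Or.inl h)
  have hcA : c ∈ A := by
    by_contra hcA
    have hcK : c ∈ K := by
      by_contra hcK
      exact hcL ⟨fun h => h.elim hc hcA, hcK⟩
    exact hKL c hcK b' hb'A hb'b hb'.2 hbc.symm
  obtain ⟨k, hk, d, hd, hdK, hkd⟩ := hB K hKA ⟨v, hvK⟩ (fun h => hbK (h.symm ▸ hbA : b ∈ K))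
  have hdb : d = b := by
    by_contra hdb
    exact hKL k hk d hd hdb hdK hkd
  subst hdb
  refine hno b' d hbK ⟨hb'A, fun h => hb'.2 ((show b' = v from h) ▸ hvK), ⟨c, hcA, hbc.symm⟩,
    Set.insert_subset hbA hKA, ?_, Or.inr hvK, pf_cut_insert hK hk hkd⟩
  rintro (h | h)
  · exact hb'b h
  · exact hb'.2 h

theorem pf_split {V : Type*} [Fintype V] [DecidableEq V] {G : SimpleGraph V}
    (h2 : ∀ x : V, PFCut G (({x} : Set V)ᶜ)) {u v : V} (huv : u ≠ v)
    (f : V → ℕ) (hf01 : ∀ w, f w ≤ 1) (hfu : f u = 1) (hs : 4 ≤ ∑ w, f w) :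
    ∃ A : Finset V, u ∈ A ∧ v ∉ A ∧ PFCut G (A : Set V) ∧ PFCut G (A : Set V)ᶜ ∧
      ∑ w ∈ A, f w = 2 := by
  let Q : Set (Finset V) := {A | u ∈ A ∧ v ∉ A ∧ PFCut G (A : Set V) ∧ PFCut G (A : Set V)ᶜ ∧
      ∑ w ∈ A, f w ≤ 2}
  have hQ : Q.Nonempty := by
    refine ⟨{u}, by simp, by simpa using huv.symm, ?_, ?_, by simp [hfu]⟩
    · simpa using pf_cut_singleton G u
    · simpa using h2 u
  obtain ⟨A, ⟨hu, hv, hA, hB, hle⟩, hmax⟩ :=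
    Set.exists_max_image Q (fun p => p.card) Q.toFinite hQ
  refine ⟨A, hu, hv, hA, hB, ?_⟩
  by_contra hne
  have hw : ∃ w, w ∉ A ∧ w ≠ v := by
    by_contra hcon
    push Not at hcon
    have h1 : ∑ w, f w ≤ ∑ w ∈ insert v A, f w := by
      refine Finset.sum_le_sum_of_subset fun z _ => ?_
      by_cases hz : z ∈ A
      · exact Finset.mem_insert_of_mem hz
      · rw [hcon z hz]; exact Finset.mem_insert_self _ _
    rw [Finset.sum_insert hv] at h1
    have := hf01 v
    omega
  obtain ⟨w, hw, hwv⟩ := hw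
  obtain ⟨b, hb, hbv, h3, h4⟩ := pf_step h2 hA hB (by exact_mod_cast hu) (by exact_mod_cast hv)
    (by exact_mod_cast hw) hwv
  have hb : b ∉ A := by exact_mod_cast hb
  have hq : insert b A ∈ Q := by
    refine ⟨Finset.mem_insert_of_mem hu, ?_, by simpa using h3, by simpa using h4, ?_⟩
    · simp [hv, hbv.symm]
    · rw [Finset.sum_insert hb]
      have := hf01 b
      omega
  have := hmax _ hq
  rw [Finset.card_insert_of_notMem hb] at this
  omega

open Classical in
noncomputable def pfpar {V : Type*} [Fintype V] (F : SimpleGraph V) (w : V) : ZMod 2 :=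
  ∑ y, if F.Adj w y then 1 else 0

theorem pf_fdeg {V : Type*} [Fintype V] (F : SimpleGraph V) (w : V) :
    ((fdeg F w : ℕ) : ZMod 2) = pfpar F w := by
  classical
  unfold fdeg pfpar
  rw [Finset.sum_boole, Set.ncard_eq_toFinset_card']
  congr 2
  ext y
  simp

theorem pf_add {V : Type*} [Fintype V] (F H : SimpleGraph V) (w : V) :
    pfpar (symmDiff F H) w = pfpar F w + pfpar H w := by
  classical
  unfold pfpar
  rw [← Finset.sum_add_distrib]
  refine Finset.sum_congr rfl fun y _ => ?_
  have h : (1 : ZMod 2) + 1 = 0 := by decide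
  by_cases h1 : F.Adj w y <;> by_cases h2 : H.Adj w y <;> simp [symmDiff, h1, h2, h]

theorem pf_bot {V : Type*} [Fintype V] (w : V) : pfpar (⊥ : SimpleGraph V) w = 0 := by
  simp [pfpar]

open Classical in
theorem pf_edge {V : Type*} [Fintype V] {x y : V} (h : x ≠ y) (w : V) :
    pfpar (edge x y) w = (if w = x then 1 else 0) + (if w = y then 1 else 0) := by
  unfold pfpar
  by_cases h1 : w = x
  · subst h1
    have : ∀ z, (edge w y).Adj w z ↔ z = y := by
      intro z; rw [edge_adj]; constructor
      · rintro ⟨⟨_, h'⟩ | ⟨h', _⟩, _⟩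
        · exact h'
        · exact absurd h' h
      · rintro rfl; exact ⟨Or.inl ⟨rfl, rfl⟩, h⟩
    simp only [this]; simp [h]
  · by_cases h2 : w = y
    · subst h2
      have : ∀ z, (edge x w).Adj w z ↔ z = x := by
        intro z; rw [edge_adj]; constructor
        · rintro ⟨⟨h', _⟩ | ⟨_, h'⟩, _⟩
          · exact absurd h' h1
          · exact h'
        · rintro rfl; exact ⟨Or.inr ⟨rfl, rfl⟩, h1⟩
      simp only [this]; simp [h1]
    · simp [h1, h2, edge_adj]

open Classical in
def PFPath {V : Type*} [Fintype V] (G : SimpleGraph V) (x y : V) : Prop :=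
  ∃ P : SimpleGraph V, P ≤ G ∧
    ∀ w, pfpar P w = (if w = x then 1 else 0) + (if w = y then 1 else 0)

theorem pf_path_refl {V : Type*} [Fintype V] (G : SimpleGraph V) (x : V) : PFPath G x x :=
  ⟨⊥, bot_le, fun w => by rw [pf_bot, CharTwo.add_self_eq_zero]⟩

theorem pf_symmDiff_le {V : Type*} {G P Q : SimpleGraph V} (hP : P ≤ G) (hQ : Q ≤ G) :
    symmDiff P Q ≤ G := symmDiff_le_sup.trans (sup_le hP hQ)

theorem pf_path_step {V : Type*} [Fintype V] {G : SimpleGraph V} {x y z : V}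
    (h : PFPath G x y) (hyz : G.Adj y z) : PFPath G x z := by
  classical
  obtain ⟨P, hP, hp⟩ := h
  refine ⟨symmDiff P (edge y z), pf_symmDiff_le hP ?_, fun w => ?_⟩
  · exact (edge_le_iff _).2 (Or.inr hyz)
  · rw [pf_add, hp, pf_edge hyz.ne, add_assoc, ← add_assoc (if w = y then (1 : ZMod 2) else 0),
      CharTwo.add_self_eq_zero, zero_add]

theorem pf_path_of_reach {V : Type*} [Fintype V] {G : SimpleGraph V} {x y : V}
    (h : G.Reachable x y) : PFPath G x y :=
  pf_closed (fun z => PFPath G x z) (fun _ _ ha hab => pf_path_step ha hab) h (pf_path_refl G x)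

def pfres {V : Type*} (G : SimpleGraph V) (S : Set V) : SimpleGraph V where
  Adj x y := G.Adj x y ∧ x ∈ S ∧ y ∈ S
  symm := ⟨fun _ _ h => ⟨h.1.symm, h.2.2, h.2.1⟩⟩
  loopless := ⟨fun _ h => h.1.ne rfl⟩

theorem pf_path_cut {V : Type*} [Fintype V] {G : SimpleGraph V} {S : Set V} (hS : PFCut G S)
    {x y : V} (hx : x ∈ S) (hy : y ∈ S) : PFPath (pfres G S) x y := by
  by_contra hcon
  obtain ⟨a, ha, b, hb, hbX, hab⟩ := hS {z | z ∈ S ∧ PFPath (pfres G S) x z} (fun z hz => hz.1)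
    ⟨x, hx, pf_path_refl _ _⟩ (fun h => hcon (h.symm ▸ hy : y ∈ {z | z ∈ S ∧ PFPath (pfres G S) x z}).2)
  exact hbX ⟨hb, pf_path_step ha.2 ⟨hab, ha.1, hb⟩⟩

open Classical in
theorem pf_join {V : Type*} [Fintype V] {G : SimpleGraph V} {S : Set V} (hS : PFCut G S)
    {r : V} (hr : r ∈ S) (T : Finset V) (hT : ∀ t ∈ T, t ∈ S) :
    ∃ F : SimpleGraph V, F ≤ pfres G S ∧
      ∀ w, pfpar F w = (if w ∈ T then 1 else 0) + (T.card : ZMod 2) * (if w = r then 1 else 0) := by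
  induction T using Finset.induction_on with
  | empty => exact ⟨⊥, bot_le, fun w => by simp [pf_bot]⟩
  | insert t T ht ih =>
    obtain ⟨F, hF, hp⟩ := ih fun z hz => hT z (Finset.mem_insert_of_mem hz)
    obtain ⟨P, hP, hq⟩ := pf_path_cut hS (hT t (Finset.mem_insert_self _ _)) hr
    refine ⟨symmDiff F P, pf_symmDiff_le hF hP, fun w => ?_⟩
    rw [pf_add, hp, hq, Finset.card_insert_of_notMem ht]
    by_cases h1 : w = t
    · subst h1
      simp only [ht, if_true, if_false, Finset.mem_insert_self]; push_cast; ring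
    · simp only [h1, if_false, Finset.mem_insert, false_or]; push_cast; ring

theorem pf_join_even {V : Type*} [Fintype V] [DecidableEq V] {G : SimpleGraph V} {A : Finset V}
    (hS : PFCut G (A : Set V)) {r : V} (hr : r ∈ A) (f : V → ℕ) (hf01 : ∀ w, f w ≤ 1)
    (he : Even (∑ w ∈ A, f w)) :
    ∃ F : SimpleGraph V, F ≤ pfres G A ∧ ∀ w, pfpar F w = if w ∈ A then (f w : ZMod 2) else 0 := by
  obtain ⟨F, hF, hp⟩ := pf_join hS (by exact_mod_cast hr) (A.filter fun w => f w = 1)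
    (fun t ht => by exact_mod_cast (Finset.mem_filter.1 ht).1)
  refine ⟨F, hF, fun w => ?_⟩
  have hc : (A.filter fun w => f w = 1).card = ∑ w ∈ A, f w := by
    rw [Finset.card_filter]
    refine Finset.sum_congr rfl fun z _ => ?_
    have := hf01 z
    split_ifs <;> omega
  rw [hp, hc, (ZMod.natCast_eq_zero_iff_even).2 he, zero_mul, add_zero]
  have : f w = 0 ∨ f w = 1 := by have := hf01 w; omega
  by_cases h1 : w ∈ A <;> rcases this with h | h <;> simp [h1, h]

theorem pf_hand {V : Type*} [Fintype V] (F : SimpleGraph V) (K : Finset V)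
    (hK : ∀ a b, a ∈ K → F.Adj a b → b ∈ K) : ∑ w ∈ K, pfpar F w = 0 := by
  classical
  have h : ∀ w ∈ K, pfpar F w = ∑ y ∈ K, if F.Adj w y then 1 else 0 := by
    intro w hw
    unfold pfpar
    symm
    refine Finset.sum_subset (Finset.subset_univ _) fun y _ hy => ?_
    rw [if_neg fun h => hy (hK _ _ hw h)]
  rw [Finset.sum_congr rfl h, ← Finset.sum_product']
  refine Finset.sum_involution (fun p _ => (p.2, p.1)) ?_ ?_ ?_ ?_
  · intro p _
    simp only [F.adj_comm p.2 p.1]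
    exact CharTwo.add_self_eq_zero _
  · intro p _ h1 h2
    apply h1
    rw [if_neg]
    intro h3
    exact h3.ne (congrArg Prod.snd h2)
  · intro p hp
    simp only [Finset.mem_product] at hp ⊢
    exact ⟨hp.2, hp.1⟩
  · intro p _; rfl

theorem pf_exists_nbr {V : Type*} [Fintype V] {P : SimpleGraph V} {x : V}
    (h : pfpar P x = 1) : ∃ a, P.Adj x a := by
  by_contra hcon
  push Not at hcon
  simp [pfpar, hcon] at h

theorem pf_min {V : Type*} [Fintype V] {G : SimpleGraph V} {u v : V} {g : V → ZMod 2}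
    (hex : ∃ F : SimpleGraph V, F ≤ G ∧ (∀ w, pfpar F w = g w) ∧ ¬ F.Reachable u v) :
    ∃ F : SimpleGraph V, IsSemiperfectForest G F ∧ (∀ w, pfpar F w = g w) ∧
      ¬ F.Reachable u v := by
  classical
  obtain ⟨F, ⟨hF, hg, hr⟩, hmin⟩ := Set.exists_min_image
    {F : SimpleGraph V | F ≤ G ∧ (∀ w, pfpar F w = g w) ∧ ¬ F.Reachable u v}
    (fun F => F.edgeSet.ncard) (Set.toFinite _) hex
  refine ⟨F, ⟨hF, ?_, ?_⟩, hg, hr⟩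
  · rw [isAcyclic_iff_forall_edge_isBridge]
    intro e
    induction e using Sym2.ind with
    | _ x y =>
    intro hxy
    have hxy : F.Adj x y := hxy
    rw [isBridge_iff]
    intro hreach
    obtain ⟨P, hP, hp⟩ := pf_path_of_reach hreach
    have hPF : P ≤ F := hP.trans (by intro a b h; exact (deleteEdges_le _) h)
    have hPxy : ¬ P.Adj x y := fun h => by
      have := hP h
      simp at this
    have hC : symmDiff P (edge x y) ≤ F := pf_symmDiff_le hPF ((edge_le_iff _).2 (Or.inr hxy))
    have hD : symmDiff F (symmDiff P (edge x y)) ≤ F := pf_symmDiff_le le_rfl hC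
    have hlt := hmin (symmDiff F (symmDiff P (edge x y))) ⟨hD.trans hF, fun w => by
      rw [pf_add, pf_add, hp, pf_edge hxy.ne, CharTwo.add_self_eq_zero, add_zero, hg],
      fun h => hr (h.mono hD)⟩
    have : (symmDiff F (symmDiff P (edge x y))).edgeSet.ncard < F.edgeSet.ncard := by
      apply Set.ncard_lt_ncard _ (Set.toFinite _)
      refine ⟨edgeSet_mono hD, fun h => ?_⟩
      have h' : (symmDiff F (symmDiff P (edge x y))).Adj x y :=
        h (show s(x, y) ∈ F.edgeSet from hxy)
      simp [symmDiff, hxy, hPxy, edge_adj, hxy.ne] at h'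
    omega
  · intro x y hreach hG
    by_contra hxy
    obtain ⟨P, hPF, hp⟩ := pf_path_of_reach hreach
    have hne : x ≠ y := hG.ne
    obtain ⟨a, ha⟩ := pf_exists_nbr (P := P) (x := x) (by rw [hp]; simp [hne])
    obtain ⟨b, hb⟩ := pf_exists_nbr (P := P) (x := y) (by rw [hp]; simp [hne.symm])
    have hadj : ∀ c d, (symmDiff F (symmDiff P (edge x y))).Adj c d →
        (F.Adj c d ∧ ¬ P.Adj c d) ∨ (edge x y).Adj c d := by
      intro c d h
      have := @hPF c d
      simp only [symmDiff, sup_adj, sdiff_adj] at h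
      tauto
    have hlt := hmin (symmDiff F (symmDiff P (edge x y))) ⟨fun c d h => by
        rcases hadj c d h with h | h
        · exact hF h.1
        · exact (edge_le_iff _).2 (Or.inr hG) h,
      fun w => by
        rw [pf_add, pf_add, hp, pf_edge hne, CharTwo.add_self_eq_zero, add_zero, hg],
      fun h => hr (pf_closed (fun z => F.Reachable u z) (fun c d hc hcd => by
        rcases hadj c d hcd with h | h
        · exact hc.trans h.1.reachable
        · rw [edge_adj] at h
          rcases h.1 with ⟨rfl, rfl⟩ | ⟨rfl, rfl⟩
          · exact hc.trans hreach
          · exact hc.trans hreach.symm) h (Reachable.refl u))⟩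
    have hsub : (symmDiff F (symmDiff P (edge x y))).edgeSet ⊆
        insert s(x, y) (F.edgeSet \ {s(x, a), s(y, b)}) := by
      intro e
      induction e using Sym2.ind with
      | _ c d =>
      intro h
      rcases hadj c d h with h | h
      · right
        refine ⟨h.1, ?_⟩
        rintro (h' | h')
        · exact h.2 (show s(c, d) ∈ P.edgeSet from h' ▸ ha)
        · have h' : s(c, d) = s(y, b) := h'
          exact h.2 (show s(c, d) ∈ P.edgeSet from h' ▸ hb)
      · left
        rw [edge_adj] at h
        rcases h.1 with ⟨rfl, rfl⟩ | ⟨rfl, rfl⟩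
        · rfl
        · exact Sym2.eq_swap
    have h1 := Set.ncard_le_ncard hsub (Set.toFinite _)
    have h2 := Set.ncard_insert_le s(x, y) (F.edgeSet \ {s(x, a), s(y, b)})
    have hab : s(x, a) ≠ s(y, b) := by
      intro h
      rw [Sym2.eq_iff] at h
      rcases h with ⟨h, _⟩ | ⟨h, h'⟩
      · exact hne h
      · subst h'; exact hxy (hPF ha)
    have hin : ({s(x, a), s(y, b)} : Set (Sym2 V)) ⊆ F.edgeSet := by
      rintro e (rfl | rfl)
      · exact hPF ha
      · exact hPF hb
    have h3 := Set.ncard_diff_add_ncard_of_subset hin (Set.toFinite _)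
    rw [Set.ncard_pair hab] at h3
    omega

/-- Let `G` be a 2-connected graph (at least 3 vertices, connected, and connected after
deleting any single vertex), let `e = uv ∈ E(G)`, and let `f : V → {0,1}` be even-sum
with `f(u) = f(v) = 1`. Then `G` has an `f`-parity perfect forest not containing `e`
if and only if `∑_z f(z) ≥ 4`. -/
theorem parity_forest_avoiding_edge_iff_sum_ge_four {V : Type*} [Fintype V]
    (G : SimpleGraph V) (h3 : 3 ≤ Fintype.card V) (hconn : G.Connected)
    (h2 : ∀ x : V, (G.induce (({x} : Set V)ᶜ)).Connected)
    (u v : V) (huv : G.Adj u v)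
    (f : V → ℕ) (hf01 : ∀ w, f w ≤ 1) (hfsum : Even (∑ w, f w))
    (hfu : f u = 1) (hfv : f v = 1) :
    (∃ F : SimpleGraph V, IsSemiperfectForest G F ∧
        (∀ w : V, fdeg F w % 2 = f w) ∧ ¬ F.Adj u v) ↔ 4 ≤ ∑ w, f w := by
  classical
  have hcast : ∀ (F : SimpleGraph V) w, fdeg F w % 2 = f w ↔ pfpar F w = (f w : ZMod 2) := by
    intro F w
    rw [← pf_fdeg, ZMod.natCast_eq_natCast_iff']
    have := hf01 w
    rw [Nat.mod_eq_of_lt (show f w < 2 by omega)]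
  constructor
  · rintro ⟨F, ⟨_, _, hind⟩, hpar, hnot⟩
    have key : ∀ (K : Finset V) (z : V), (∀ a b, a ∈ K → F.Adj a b → b ∈ K) → z ∈ K → f z = 1 →
        2 ≤ ∑ w ∈ K, f w := by
      intro K z hK hz hfz
      have h1 := pf_hand F K hK
      rw [Finset.sum_congr rfl fun w _ => (hcast F w).1 (hpar w), ← Nat.cast_sum,
        ZMod.natCast_eq_zero_iff_even] at h1
      have h2 := Finset.single_le_sum (f := f) (fun _ _ => Nat.zero_le _) hz
      obtain ⟨m, hm⟩ := h1
      omega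
    have h1 := key (Finset.univ.filter fun w => F.Reachable u w) u (fun a b ha hab => by
      simp only [Finset.mem_filter, Finset.mem_univ, true_and] at ha ⊢
      exact ha.trans hab.reachable) (by simp) hfu
    have h2 := key (Finset.univ.filter fun w => ¬ F.Reachable u w) v (fun a b ha hab => by
      simp only [Finset.mem_filter, Finset.mem_univ, true_and] at ha ⊢
      exact fun h => ha (h.trans hab.symm.reachable))
      (by simpa using fun h => hnot (hind u v h huv)) hfv
    have := Finset.sum_filter_add_sum_filter_not Finset.univ (fun w => F.Reachable u w) f
    omega
  · intro hs
    obtain ⟨A, hu, hv, hA, hB, h2A⟩ :=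
      pf_split (fun x => pf_cut_of_conn (h2 x)) huv.ne f hf01 hfu hs
    have hsum := Finset.sum_add_sum_compl A f
    obtain ⟨F₁, hF₁, hp₁⟩ := pf_join_even hA hu f hf01 (by rw [h2A]; decide)
    obtain ⟨F₂, hF₂, hp₂⟩ := pf_join_even (A := Aᶜ) (by simpa using hB) (r := v) (by simpa using hv)
      f hf01 (by
        rw [← hsum, h2A] at hfsum
        obtain ⟨m, hm⟩ := hfsum
        exact ⟨m - 1, by omega⟩)
    obtain ⟨F, hF, hg, hr⟩ := pf_min (G := G) (u := u) (v := v) (g := fun w => (f w : ZMod 2))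
      ⟨symmDiff F₁ F₂, pf_symmDiff_le (fun a b h => (hF₁ h).1) (fun a b h => (hF₂ h).1),
        fun w => by
          rw [pf_add, hp₁, hp₂]
          by_cases hw : w ∈ A <;> simp [hw],
        fun h => hv (pf_closed (fun z => z ∈ A) (fun a b ha hab => by
          rcases (symmDiff_le_sup : symmDiff F₁ F₂ ≤ F₁ ⊔ F₂) hab with h | h
          · exact_mod_cast (hF₁ h).2.2
          · have := (hF₂ h).2.1
            simp at this
            exact absurd ha this) h hu)⟩
    exact ⟨F, hF, fun w => (hcast F w).2 (hg w), fun h => hr h.reachable⟩
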